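/- There is an absolute constant C > 0 with the following property. Let δ ∈ (0,1) and let l₁,…,l_L be unit line segments in ℝ³ with pairwise δ-separated directions. Then ∑_{1≤i<j≤L} λ(l_i^{3δ} ∩ l_j^{3δ}) ≤ C δ² L^{3/2}. -/

import Mathlib

/-!
Write `u i` for the unit direction of the `i`-th segment and `s i j` for the distance from `u j` to
the line `ℝ · u i`, i.e. the sine of the angle between the two lines.

* Two tubes of radius `3δ` meet in volume at most `216 δ³ / s i j`, because the intersection lies in
  a parallelepiped (`volume_inter_le`), and one tube has volume at most `252 δ²`
  (`volume_tube_le`). So with `m i j = max δ (s i j)` the intersection has volume at most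
  `252 δ³ / m i j`.
* For `r ≥ δ`, at most `12800 r² / δ²` indices `j` satisfy `s i j ≤ r` (`card_le_of_near`): thin
  boxes of volume `δ² / 200` along the directions `u j` are pairwise disjoint, and those with
  `s i j ≤ r` all fit in a box of volume `64 r²` around `ℝ · u i`.
* Hence `1 / m i j ≥ t` for at most `K / t²` indices `j`, where `K = 12800 / δ²`, and this weak-type
  bound implies `∑ j, 1 / m i j ≤ 2 √K √L` (`sum_le_of_card_filter`). Multiplying by `252 δ³` and
  summing over the `L` values of `i` gives the theorem.

Only the lines spanned by the directions matter for the volumes. Opposite directions count as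
separated in the hypothesis although their lines are parallel; the packing argument allows for
this, since the boxes along `u` and `-u` are disjoint.
-/

open MeasureTheory Metric ENNReal

/-! ### Volumes of parallelepipeds and boxes -/

lemma volume_parallelepiped (p : Fin 3 → EuclideanSpace ℝ (Fin 3)) (lo hi : Fin 3 → ℝ)
    (hd : (Matrix.of fun i j => p i j).det ≠ 0) :
    volume {x : EuclideanSpace ℝ (Fin 3) | ∀ i, inner ℝ (p i) x ∈ Set.Icc (lo i) (hi i)} =
      ENNReal.ofReal |(Matrix.of fun i j => p i j).det⁻¹| * ∏ i, ENNReal.ofReal (hi i - lo i) := by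
  set M := Matrix.of fun i j => p i j with hM
  have h1 : {x : EuclideanSpace ℝ (Fin 3) | ∀ i, inner ℝ (p i) x ∈ Set.Icc (lo i) (hi i)} =
      (WithLp.ofLp) ⁻¹' ((Matrix.toLin' M) ⁻¹' (Set.Icc lo hi)) := by
    ext x
    simp only [Set.mem_ofPred_eq, Set.mem_preimage, Set.mem_Icc, Pi.le_def, ← forall_and]
    refine forall_congr' fun i => ?_
    have : inner ℝ (p i) x = (Matrix.toLin' M) x.ofLp i := by
      simp [hM, Matrix.mulVec, dotProduct, PiLp.inner_apply, Fin.sum_univ_three, mul_comm]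
    rw [this]
  rw [h1, (PiLp.volume_preserving_ofLp (Fin 3)).measure_preimage
    (((measurableSet_Icc).preimage (Matrix.toLin' M).continuous_of_finiteDimensional.measurable).nullMeasurableSet),
    Measure.addHaar_preimage_linearMap _ (by simpa using hd), Real.volume_Icc_pi]
  simp

lemma volume_frame_box (e : OrthonormalBasis (Fin 3) ℝ (EuclideanSpace ℝ (Fin 3)))
    (lo hi : Fin 3 → ℝ) :
    volume {x : EuclideanSpace ℝ (Fin 3) | ∀ i, inner ℝ (e i) x ∈ Set.Icc (lo i) (hi i)} =
      ∏ i, ENNReal.ofReal (hi i - lo i) := by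
  have h1 : {x : EuclideanSpace ℝ (Fin 3) | ∀ i, inner ℝ (e i) x ∈ Set.Icc (lo i) (hi i)} =
      e.repr ⁻¹' ((WithLp.ofLp) ⁻¹' (Set.Icc lo hi)) := by
    ext x
    simp [Set.mem_Icc, Pi.le_def, ← forall_and, OrthonormalBasis.repr_apply_apply]
  rw [h1, e.measurePreserving_repr.measure_preimage
    ((measurableSet_Icc.preimage (by fun_prop)).nullMeasurableSet),
    (PiLp.volume_preserving_ofLp (Fin 3)).measure_preimage measurableSet_Icc.nullMeasurableSet,
    Real.volume_Icc_pi]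

lemma exists_frame (u : EuclideanSpace ℝ (Fin 3)) (hu : ‖u‖ = 1) :
    ∃ e : OrthonormalBasis (Fin 3) ℝ (EuclideanSpace ℝ (Fin 3)), e 0 = u := by
  obtain ⟨e, he⟩ := Orthonormal.exists_orthonormalBasis_extension_of_card_eq
    (𝕜 := ℝ) (E := EuclideanSpace ℝ (Fin 3)) (ι := Fin 3) (by simp) (v := fun _ => u) (s := {0})
    (by
      constructor
      · intro i; simpa using hu
      · intro i j hij; exact absurd (Subsingleton.elim i j) hij)
  exact ⟨e, he 0 rfl⟩

/-! ### Summation from a weak-type bound -/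

/-- A weak-type bound (at most `K / t²` values are `≥ t`) bounds the sum of `n` positive numbers by
`2 √K √n`. Induction on `n`, removing the smallest value: by the hypothesis it is at most `√(K / n)`,
while `√n - √(n - 1) ≥ 1 / (2 √n)`. -/
lemma sum_le_of_card_filter (K : ℝ) {ι : Type*} [DecidableEq ι] (g : ι → ℝ) (n : ℕ) :
    ∀ S : Finset ι, S.card = n → (∀ j ∈ S, 0 < g j) →
    (∀ t, 0 < t → ((S.filter (fun j => t ≤ g j)).card : ℝ) * t ^ 2 ≤ K) →
    ∑ j ∈ S, g j ≤ 2 * √K * √n := by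
  induction n with
  | zero => intro S hS _ _; simp [Finset.card_eq_zero.mp hS]
  | succ n ih =>
    intro S hS hg hK
    obtain ⟨j, hj, hmin⟩ := S.exists_min_image g (Finset.card_pos.mp (by omega))
    have hsub := ih (S.erase j) (by rw [Finset.card_erase_of_mem hj]; omega)
      (fun i hi => hg i (Finset.mem_of_mem_erase hi)) (fun t ht => by
        refine le_trans ?_ (hK t ht)
        gcongr
        exact Finset.erase_subset _ _)
    rw [← Finset.add_sum_erase S g hj]
    have h1 := hK (g j) (hg j hj)
    rw [Finset.filter_true_of_mem hmin, hS] at h1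
    have hK0 : 0 ≤ K := le_trans (by positivity) h1
    have h2 : √((n + 1 : ℕ) : ℝ) * g j ≤ √K := by
      apply Real.le_sqrt_of_sq_le
      rw [mul_pow, Real.sq_sqrt (by positivity)]; exact h1
    set a := √((n + 1 : ℕ) : ℝ) with ha
    set b := √(n : ℝ) with hb
    have ha2 : a ^ 2 = n + 1 := by rw [ha, Real.sq_sqrt (by positivity)]; push_cast; ring
    have hb2 : b ^ 2 = n := by rw [hb, Real.sq_sqrt (by positivity)]
    have hapos : 0 < a := by rw [ha]; positivity
    have hb0 : 0 ≤ b := Real.sqrt_nonneg _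
    have hk0 : 0 ≤ √K := Real.sqrt_nonneg _
    -- `a (a - b) ≥ 1/2` because `a² - b² = 1` and `a² + b² ≥ 2ab`.
    have h3 : 1 ≤ 2 * a * (a - b) := by nlinarith [sq_nonneg (a - b)]
    have h4 : a * g j ≤ a * (2 * √K * (a - b)) := by nlinarith
    have h5 := le_of_mul_le_mul_left h4 hapos
    linarith

/-! ### Volumes of tubes and of their intersections -/

lemma mem_tube {a b x : EuclideanSpace ℝ (Fin 3)} {ρ : ℝ} (hρ : 0 ≤ ρ)
    (hx : x ∈ cthickening ρ (segment ℝ a b)) :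
    ∃ t ∈ Set.Icc (0 : ℝ) 1, ∃ e : EuclideanSpace ℝ (Fin 3), ‖e‖ ≤ ρ ∧
      x = a + t • (b - a) + e := by
  have hc : IsCompact (segment ℝ a b) := by
    rw [segment_eq_image']
    exact isCompact_Icc.image (by fun_prop)
  rw [hc.cthickening_eq_biUnion_closedBall hρ] at hx
  simp only [Set.mem_iUnion, mem_closedBall, exists_prop] at hx
  obtain ⟨y, hy, hxy⟩ := hx
  rw [segment_eq_image'] at hy
  obtain ⟨t, ht, rfl⟩ := hy
  exact ⟨t, ht, x - (a + t • (b - a)), by rwa [← dist_eq_norm], by abel⟩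

/-- The bound used for a point `x = c + (multiple of a vector orthogonal to p) + e`. -/
lemma abs_inner_mem {p e c x : EuclideanSpace ℝ (Fin 3)} {r ρ : ℝ} (hp : ‖p‖ ≤ r) (he : ‖e‖ ≤ ρ)
    (h : inner ℝ p x = inner ℝ p c + inner ℝ p e) :
    inner ℝ p x ∈ Set.Icc (inner ℝ p c - r * ρ) (inner ℝ p c + r * ρ) := by
  have h1 := abs_le.mp ((abs_real_inner_le_norm p e).trans
    (mul_le_mul hp he (norm_nonneg _) ((norm_nonneg p).trans hp)))
  constructor <;> linarith [h1.1, h1.2]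

lemma volume_tube_le {δ : ℝ} (h0 : 0 < δ) (h1 : δ < 1) (a b : EuclideanSpace ℝ (Fin 3))
    (hu : ‖b - a‖ = 1) :
    volume (cthickening (3 * δ) (segment ℝ a b)) ≤ ENNReal.ofReal (252 * δ ^ 2) := by
  obtain ⟨e, he⟩ := exists_frame (b - a) hu
  have hsub : cthickening (3 * δ) (segment ℝ a b) ⊆
      {x | ∀ i, inner ℝ (e i) x ∈
        Set.Icc ((![inner ℝ (e 0) a - 3, inner ℝ (e 1) a - 1 * (3 * δ),
            inner ℝ (e 2) a - 1 * (3 * δ)] : Fin 3 → ℝ) i)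
          ((![inner ℝ (e 0) a + 4, inner ℝ (e 1) a + 1 * (3 * δ),
            inner ℝ (e 2) a + 1 * (3 * δ)] : Fin 3 → ℝ) i)} := by
    intro x hx
    obtain ⟨t, ht, f, hf, rfl⟩ := mem_tube (by positivity) hx
    rw [← he]
    have h10 : inner ℝ (e 1) (e 0) = 0 := e.orthonormal.2 (by decide)
    have h20 : inner ℝ (e 2) (e 0) = 0 := e.orthonormal.2 (by decide)
    have h00 : inner ℝ (e 0) (e 0) = (1 : ℝ) := by simp
    have key := abs_le.mp ((abs_real_inner_le_norm (e 0) f).trans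
      (mul_le_mul (e.norm_eq_one 0).le hf (norm_nonneg _) zero_le_one))
    have ht1 := ht.1
    have ht2 := ht.2
    intro i
    fin_cases i
    · simp only [inner_add_right, inner_smul_right, Fin.zero_eta, Matrix.cons_val_zero, h00]
      constructor <;> linarith [key.1, key.2]
    · exact abs_inner_mem (e.norm_eq_one 1).le hf
        (by simp [inner_add_right, inner_smul_right, h10])
    · exact abs_inner_mem (e.norm_eq_one 2).le hf
        (by simp [inner_add_right, inner_smul_right, h20])
  refine (measure_mono hsub).trans ?_
  rw [volume_frame_box, ← ENNReal.ofReal_prod_of_nonneg]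
  · apply ENNReal.ofReal_le_ofReal
    simp only [Fin.prod_univ_three, Matrix.cons_val_zero, Matrix.cons_val_one, Matrix.cons_val]
    nlinarith
  · intro i _
    fin_cases i <;> simp <;> nlinarith

/-- Let `s > 0` be the sine of the angle between unit directions `u`, `v` and `c = ⟪u, v⟫`. The
vectors `v - c u`, `u × v`, `u - c v` have length `s` and determinant `s⁴`; the first two are
orthogonal to `u` and the third to `v`, so on the intersection of the tubes each of the three inner
products ranges over an interval of length `2 s ρ`. The volume is thus at most `(2 s ρ)³ / s⁴`. -/
lemma volume_inter_le {ρ : ℝ} (h0 : 0 ≤ ρ) (a b a' b' : EuclideanSpace ℝ (Fin 3))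
    (hu : ‖b - a‖ = 1) (hv : ‖b' - a'‖ = 1)
    (s : ℝ) (hs : s = ‖(b' - a') - (inner ℝ (b - a) (b' - a') : ℝ) • (b - a)‖) (hs0 : 0 < s) :
    volume (cthickening ρ (segment ℝ a b) ∩ cthickening ρ (segment ℝ a' b')) ≤
      ENNReal.ofReal (8 * ρ ^ 3 / s) := by
  set u := b - a with hu'
  set v := b' - a' with hv'
  set c : ℝ := inner ℝ u v with hc
  have hs2 : s ^ 2 = 1 - c ^ 2 := by
    rw [hs, norm_sub_sq_real, norm_smul, hu, hv, inner_smul_right, real_inner_comm, ← hc]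
    simp; ring
  have huu : u 0 ^ 2 + u 1 ^ 2 + u 2 ^ 2 = 1 := by
    have := EuclideanSpace.real_norm_sq_eq u
    rw [hu, Fin.sum_univ_three] at this; linarith
  have hvv : v 0 ^ 2 + v 1 ^ 2 + v 2 ^ 2 = 1 := by
    have := EuclideanSpace.real_norm_sq_eq v
    rw [hv, Fin.sum_univ_three] at this; linarith
  have hcc : c = u 0 * v 0 + u 1 * v 1 + u 2 * v 2 := by
    rw [hc]; simp [PiLp.inner_apply, Fin.sum_univ_three, mul_comm]
  clear_value c
  set p : Fin 3 → EuclideanSpace ℝ (Fin 3) := ![v - c • u,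
    !₂[u 1 * v 2 - u 2 * v 1, u 2 * v 0 - u 0 * v 2, u 0 * v 1 - u 1 * v 0], u - c • v] with hp
  have hcross : (u 1 * v 2 - u 2 * v 1) ^ 2 + (u 2 * v 0 - u 0 * v 2) ^ 2 +
      (u 0 * v 1 - u 1 * v 0) ^ 2 = s ^ 2 := by
    rw [hs2, hcc]
    linear_combination (v 0 ^ 2 + v 1 ^ 2 + v 2 ^ 2) * huu + hvv
  have hdet : (Matrix.of fun i j => p i j).det = s ^ 4 := by
    have : (Matrix.of fun i j => p i j).det = (1 - c ^ 2) * ((u 1 * v 2 - u 2 * v 1) ^ 2 +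
        (u 2 * v 0 - u 0 * v 2) ^ 2 + (u 0 * v 1 - u 1 * v 0) ^ 2) := by
      simp [Matrix.det_fin_three, hp]; ring
    rw [this, hcross, ← hs2]; ring
  have hcu : inner ℝ u v = c := by
    rw [hcc]; simp [PiLp.inner_apply, Fin.sum_univ_three, mul_comm]
  have hp0 : ‖p 0‖ ≤ s := hs.ge
  have hp1 : ‖p 1‖ ≤ s := by
    refine le_of_sq_le_sq ?_ hs0.le
    rw [EuclideanSpace.real_norm_sq_eq, ← hcross]
    simp [hp, Fin.sum_univ_three]
  have hp2 : ‖p 2‖ ≤ s := by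
    refine le_of_sq_le_sq ?_ hs0.le
    simp only [hp, Matrix.cons_val]
    rw [hs2, norm_sub_sq_real, norm_smul, hu, hv, inner_smul_right, hcu]
    simp; nlinarith
  have hi0 : inner ℝ (p 0) u = 0 := by
    simp only [hp, Matrix.cons_val_zero]
    rw [inner_sub_left, inner_smul_left, real_inner_comm, hcu, real_inner_self_eq_norm_sq, hu]
    simp
  have hi1 : inner ℝ (p 1) u = 0 := by
    simp [hp, PiLp.inner_apply, Fin.sum_univ_three]; ring
  have hi2 : inner ℝ (p 2) v = 0 := by
    simp only [hp, Matrix.cons_val]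
    rw [inner_sub_left, inner_smul_left, hcu, real_inner_self_eq_norm_sq, hv]
    simp
  have hsub : cthickening ρ (segment ℝ a b) ∩ cthickening ρ (segment ℝ a' b') ⊆
      {x | ∀ i, inner ℝ (p i) x ∈
        Set.Icc (inner ℝ (p i) ((![a, a, a'] : Fin 3 → EuclideanSpace ℝ (Fin 3)) i) - s * ρ)
          (inner ℝ (p i) ((![a, a, a'] : Fin 3 → EuclideanSpace ℝ (Fin 3)) i) + s * ρ)} := by
    rintro x ⟨hx, hx'⟩
    obtain ⟨t, -, f, hf, hxf⟩ := mem_tube h0 hx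
    obtain ⟨t', -, f', hf', hxf'⟩ := mem_tube h0 hx'
    rw [← hu'] at hxf
    rw [← hv'] at hxf'
    intro i
    fin_cases i
    · exact abs_inner_mem hp0 hf (by simp [hxf, inner_add_right, inner_smul_right, hi0])
    · exact abs_inner_mem hp1 hf (by simp [hxf, inner_add_right, inner_smul_right, hi1])
    · exact abs_inner_mem hp2 hf' (by simp [hxf', inner_add_right, inner_smul_right, hi2])
  refine (measure_mono hsub).trans ?_
  rw [volume_parallelepiped _ _ _ (by rw [hdet]; simp [hs0.ne']), hdet,
    ← ENNReal.ofReal_prod_of_nonneg (fun i _ => by have := mul_nonneg hs0.le h0; linarith),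
    ← ENNReal.ofReal_mul (abs_nonneg _)]
  apply ENNReal.ofReal_le_ofReal
  rw [abs_inv, abs_of_nonneg (by positivity), Fin.prod_univ_three]
  apply le_of_eq
  field_simp
  ring

/-! ### Packing of separated directions -/

/-- For unit vectors `2 - 2⟪u, v⟫ = ‖u - v‖²`, so the chord has length at least `δ / 2`. -/
lemma sq_le_two_sub_two_inner {δ : ℝ} (hδ : 0 ≤ δ) {u v : EuclideanSpace ℝ (Fin 3)}
    (hu : ‖u‖ = 1) (hv : ‖v‖ = 1) (h : δ ≤ InnerProductGeometry.angle u v) :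
    δ ^ 2 / 4 ≤ 2 - 2 * inner ℝ u v := by
  have h1 := InnerProductGeometry.cos_angle_mul_norm_mul_norm u v
  rw [hu, hv] at h1
  have h2 := Real.cos_le_cos_of_nonneg_of_le_pi hδ (InnerProductGeometry.angle_le_pi u v) h
  have h3 := Real.cos_le_one_sub_mul_cos_sq (x := δ)
    (by rw [abs_of_nonneg hδ]; exact h.trans (InnerProductGeometry.angle_le_pi u v))
  have h4 : (1 : ℝ) / 8 ≤ 2 / Real.pi ^ 2 := by
    rw [div_le_div_iff₀ (by norm_num) (by positivity)]
    nlinarith [Real.pi_le_four, Real.pi_pos]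
  nlinarith [sq_nonneg δ]

/-- The box `1/2 ≤ ⟪e 0, x⟫ ≤ 1`, `|⟪e 1, x⟫|, |⟪e 2, x⟫| ≤ δ / 20`: the outer half of a thin tube
along `e 0` starting at the origin. Staying away from the origin is what makes the boxes of separated
directions disjoint. -/
def thinBox (e : OrthonormalBasis (Fin 3) ℝ (EuclideanSpace ℝ (Fin 3))) (δ : ℝ) :
    Set (EuclideanSpace ℝ (Fin 3)) :=
  {x | ∀ i, inner ℝ (e i) x ∈ Set.Icc ((![1 / 2, -(δ / 20), -(δ / 20)] : Fin 3 → ℝ) i)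
    ((![1, δ / 20, δ / 20] : Fin 3 → ℝ) i)}

lemma mem_thinBox {e : OrthonormalBasis (Fin 3) ℝ (EuclideanSpace ℝ (Fin 3))} {δ : ℝ}
    {x : EuclideanSpace ℝ (Fin 3)} (hx : x ∈ thinBox e δ) :
    ∃ t ∈ Set.Icc (1 / 2 : ℝ) 1, ∃ f : EuclideanSpace ℝ (Fin 3), ‖f‖ ≤ δ / 10 ∧
      x = t • e 0 + f := by
  have h0 := hx 0
  have h1 := abs_le.mpr (hx 1)
  have h2 := abs_le.mpr (hx 2)
  simp only [Matrix.cons_val] at h0 h1 h2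
  refine ⟨_, h0, (inner ℝ (e 1) x : ℝ) • e 1 + (inner ℝ (e 2) x : ℝ) • e 2, ?_, ?_⟩
  · refine (norm_add_le _ _).trans ?_
    rw [norm_smul, norm_smul, e.norm_eq_one, e.norm_eq_one, Real.norm_eq_abs, Real.norm_eq_abs]
    linarith
  · conv_lhs => rw [← e.sum_repr' x]
    rw [Fin.sum_univ_three, add_assoc]

lemma volume_thinBox (e : OrthonormalBasis (Fin 3) ℝ (EuclideanSpace ℝ (Fin 3))) {δ : ℝ}
    (hδ : 0 < δ) : volume (thinBox e δ) = ENNReal.ofReal (δ ^ 2 / 200) := by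
  unfold thinBox
  rw [volume_frame_box, ← ENNReal.ofReal_prod_of_nonneg]
  · congr 1
    simp only [Fin.prod_univ_three, Matrix.cons_val_zero, Matrix.cons_val_one, Matrix.cons_val]
    ring
  · intro i _
    fin_cases i <;> simp <;> linarith

lemma measurableSet_thinBox (e : OrthonormalBasis (Fin 3) ℝ (EuclideanSpace ℝ (Fin 3))) (δ : ℝ) :
    MeasurableSet (thinBox e δ) := by
  unfold thinBox
  simp only [Set.ofPred_forall]
  exact MeasurableSet.iInter fun i => measurableSet_Icc.preimage (by fun_prop)

lemma disjoint_thinBox {e e' : OrthonormalBasis (Fin 3) ℝ (EuclideanSpace ℝ (Fin 3))} {δ : ℝ}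
    (hδ : 0 < δ) (h : δ ≤ InnerProductGeometry.angle (e 0) (e' 0)) :
    Disjoint (thinBox e δ) (thinBox e' δ) := by
  rw [Set.disjoint_left]
  intro x hx hx'
  obtain ⟨t, ht, f, hf, hxf⟩ := mem_thinBox hx
  obtain ⟨t', ht', f', hf', hxf'⟩ := mem_thinBox hx'
  have h1 := sq_le_two_sub_two_inner hδ.le (e.norm_eq_one 0) (e'.norm_eq_one 0) h
  have h2 : ‖t • e 0 - t' • e' 0‖ ≤ δ / 5 := by
    have : t • e 0 - t' • e' 0 = f' - f := by
      rw [sub_eq_sub_iff_add_eq_add, ← hxf, hxf', add_comm]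
    rw [this]
    exact (norm_sub_le _ _).trans (by linarith)
  have h3 : ‖t • e 0 - t' • e' 0‖ ^ 2 ≤ (δ / 5) ^ 2 := by gcongr
  rw [norm_sub_sq_real, norm_smul, norm_smul, inner_smul_left, inner_smul_right, e.norm_eq_one,
    e'.norm_eq_one] at h3
  simp only [Real.norm_eq_abs, mul_one, sq_abs, conj_trivial] at h3
  -- `‖t u - t' v‖² = (t - t')² + t t' (2 - 2⟪u, v⟫) ≥ δ² / 16`, contradicting `h3`.
  have h4 : 1 / 4 ≤ t * t' := by nlinarith [ht.1, ht'.1]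
  nlinarith [sq_nonneg (t - t'), mul_le_mul h4 h1 (by positivity) (by linarith)]

/-- Among unit vectors with pairwise angles at least `δ`, at most `12800 r² / δ²` lie within distance
`r ≥ δ` of the line `ℝ · u`, by comparing the volumes of the disjoint thin boxes with that of the box
of side lengths `4`, `4 r`, `4 r` that contains them. -/
lemma card_le_of_near {ι : Type*} (S : Finset ι) (v : ι → EuclideanSpace ℝ (Fin 3))
    (hv : ∀ i, ‖v i‖ = 1) {δ : ℝ} (h0 : 0 < δ) (h1 : δ < 1)
    (hsep : ∀ i j, i ≠ j → δ ≤ InnerProductGeometry.angle (v i) (v j))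
    (u : EuclideanSpace ℝ (Fin 3)) (hu : ‖u‖ = 1) {r : ℝ} (hr : δ ≤ r)
    (hS : ∀ j ∈ S, ‖v j - (inner ℝ u (v j) : ℝ) • u‖ ≤ r) :
    (S.card : ℝ) * δ ^ 2 ≤ 12800 * r ^ 2 := by
  choose e he using fun i => exists_frame (v i) (hv i)
  obtain ⟨E, rfl⟩ := exists_frame u hu
  have hsub : (⋃ j ∈ S, thinBox (e j) δ) ⊆ {x | ∀ i, inner ℝ (E i) x ∈
      Set.Icc ((![-2, -(2 * r), -(2 * r)] : Fin 3 → ℝ) i)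
        ((![2, 2 * r, 2 * r] : Fin 3 → ℝ) i)} := by
    intro x hx
    simp only [Set.mem_iUnion, exists_prop] at hx
    obtain ⟨j, hj, hx⟩ := hx
    obtain ⟨t, ht, f, hf, rfl⟩ := mem_thinBox hx
    rw [he]
    have hfE : ∀ i, |inner ℝ (E i) f| ≤ δ / 10 := fun i =>
      (abs_real_inner_le_norm _ _).trans (by rw [E.norm_eq_one]; linarith)
    have hside : ∀ i, i ≠ 0 → |inner ℝ (E i) (t • v j + f)| ≤ 2 * r := by
      intro i hi
      have hi0 : inner ℝ (E i) (E 0) = 0 := E.orthonormal.2 hi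
      have h2 : |inner ℝ (E i) (v j)| ≤ r := by
        have h3 := abs_real_inner_le_norm (E i) (v j - (inner ℝ (E 0) (v j) : ℝ) • E 0)
        rw [E.norm_eq_one, one_mul] at h3
        replace h3 := h3.trans (hS j hj)
        rwa [inner_sub_right, inner_smul_right, hi0, mul_zero, sub_zero] at h3
      rw [inner_add_right, inner_smul_right]
      refine (abs_add_le _ _).trans ?_
      rw [abs_mul, abs_of_nonneg (by linarith [ht.1] : (0 : ℝ) ≤ t)]
      nlinarith [hfE i, ht.1, ht.2, abs_nonneg (inner ℝ (E i) (v j))]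
    intro i
    fin_cases i
    · refine abs_le.mp ?_
      refine (abs_real_inner_le_norm _ _).trans ?_
      rw [E.norm_eq_one, one_mul]
      refine (norm_add_le _ _).trans ?_
      rw [norm_smul, hv, Real.norm_eq_abs, abs_of_nonneg (by linarith [ht.1] : (0 : ℝ) ≤ t)]
      change t * 1 + ‖f‖ ≤ 2
      linarith [ht.2]
    · exact abs_le.mp (hside 1 (by decide))
    · exact abs_le.mp (hside 2 (by decide))
  have h2 := measure_mono (μ := volume) hsub
  rw [measure_biUnion_finset
    (fun i _ j _ hij => disjoint_thinBox h0 (by rw [he, he]; exact hsep i j hij))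
    (fun j _ => measurableSet_thinBox _ _), volume_frame_box,
    ← ENNReal.ofReal_prod_of_nonneg (fun i _ => by fin_cases i <;> simp <;> linarith)] at h2
  simp only [volume_thinBox _ h0, Finset.sum_const, nsmul_eq_mul] at h2
  rw [← ENNReal.ofReal_natCast, ← ENNReal.ofReal_mul (by positivity)] at h2
  have h3 := (ENNReal.ofReal_le_ofReal_iff
    (Finset.prod_nonneg fun i _ => by fin_cases i <;> simp <;> linarith)).mp h2
  simp only [Fin.prod_univ_three, Matrix.cons_val_zero, Matrix.cons_val_one, Matrix.cons_val] at h3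
  linarith

/-! ### Summation over pairs -/

/-- There is an absolute constant `C > 0` such that for unit segments in `ℝ³` with pairwise
`δ`-separated directions, `∑_{i<j} λ(l_i^{3δ} ∩ l_j^{3δ}) ≤ C δ² L^{3/2}`. -/
theorem stmt14 :
    ∃ C : ℝ, 0 < C ∧ ∀ δ : ℝ, δ ∈ Set.Ioo (0 : ℝ) 1 →
      ∀ (L : ℕ) (a b : Fin L → EuclideanSpace ℝ (Fin 3)),
        (∀ i, dist (a i) (b i) = 1) →
        (∀ i j, i ≠ j → δ ≤ InnerProductGeometry.angle (b i - a i) (b j - a j)) →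
          (∑ p ∈ Finset.univ.filter (fun p : Fin L × Fin L => p.1 < p.2),
              (volume : Measure (EuclideanSpace ℝ (Fin 3)))
                (cthickening (3 * δ) (segment ℝ (a p.1) (b p.1)) ∩
                  cthickening (3 * δ) (segment ℝ (a p.2) (b p.2))))
            ≤ ENNReal.ofReal (C * δ ^ 2 * (L : ℝ) ^ ((3 : ℝ) / 2)) := by
  refine ⟨504 * √12800, by positivity, ?_⟩
  rintro δ ⟨h0, h1⟩ L a b hd hsep
  have hu : ∀ i, ‖b i - a i‖ = 1 := fun i => by rw [← dist_eq_norm, dist_comm]; exact hd i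
  set m : Fin L → Fin L → ℝ := fun i j =>
    max δ ‖(b j - a j) - (inner ℝ (b i - a i) (b j - a j) : ℝ) • (b i - a i)‖ with hm
  have hm0 : ∀ i j, 0 < m i j := fun i j => lt_max_of_lt_left h0
  have hpair : ∀ i j, volume (cthickening (3 * δ) (segment ℝ (a i) (b i)) ∩
      cthickening (3 * δ) (segment ℝ (a j) (b j))) ≤
      ENNReal.ofReal (252 * δ ^ 3 * (1 / m i j)) := by
    intro i j
    rcases le_total ‖(b j - a j) - (inner ℝ (b i - a i) (b j - a j) : ℝ) • (b i - a i)‖ δ with h | h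
    · refine (measure_mono Set.inter_subset_left).trans
        ((volume_tube_le h0 h1 _ _ (hu i)).trans (le_of_eq ?_))
      simp only [hm, max_eq_left h]
      congr 1
      field_simp
    · refine (volume_inter_le (by positivity) _ _ _ _ (hu i) (hu j) _ rfl
        (h0.trans_le h)).trans ?_
      simp only [hm, max_eq_right h]
      apply ENNReal.ofReal_le_ofReal
      rw [mul_one_div]
      refine div_le_div_of_nonneg_right ?_ (h0.le.trans h)
      nlinarith [pow_pos h0 3]
  have hrow : ∀ i, ∑ j, 1 / m i j ≤ 2 * √(12800 / δ ^ 2) * √L := by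
    intro i
    refine sum_le_of_card_filter _ _ _ _ (by simp) (fun j _ => by have := hm0 i j; positivity) ?_
    intro t ht
    rcases (Finset.univ.filter (fun j => t ≤ 1 / m i j)).eq_empty_or_nonempty with he | ⟨j, hj⟩
    · rw [he]; simp; positivity
    have key : ∀ j ∈ Finset.univ.filter (fun j => t ≤ 1 / m i j), m i j ≤ 1 / t := by
      intro j hj
      have := (Finset.mem_filter.mp hj).2
      rwa [le_div_iff₀ ht, mul_comm, ← le_div_iff₀ (hm0 i j)]
    have h2 := card_le_of_near _ (fun j => b j - a j) hu h0 h1 hsep (b i - a i) (hu i)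
      ((le_max_left _ _).trans (key j hj)) (fun j hj => (le_max_right _ _).trans (key j hj))
    rw [le_div_iff₀ (by positivity)]
    have h3 := mul_le_mul_of_nonneg_right h2 (sq_nonneg t)
    have h4 : 12800 * (1 / t) ^ 2 * t ^ 2 = 12800 := by field_simp
    linarith
  -- Every term is nonnegative, so the sum over `i < j` may be enlarged to all pairs, diagonal included.
  calc _ ≤ ∑ p ∈ Finset.univ.filter (fun p : Fin L × Fin L => p.1 < p.2),
        ENNReal.ofReal (252 * δ ^ 3 * (1 / m p.1 p.2)) :=
        Finset.sum_le_sum fun p _ => hpair p.1 p.2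
    _ ≤ ∑ p : Fin L × Fin L, ENNReal.ofReal (252 * δ ^ 3 * (1 / m p.1 p.2)) :=
        Finset.sum_le_sum_of_subset (Finset.filter_subset _ _)
    _ = ENNReal.ofReal (∑ i, 252 * δ ^ 3 * ∑ j, (1 / m i j)) := by
        rw [← ENNReal.ofReal_sum_of_nonneg
          (fun p _ => by have := hm0 p.1 p.2; positivity), Fintype.sum_prod_type]
        simp only [Finset.mul_sum]
    _ ≤ _ := by
        apply ENNReal.ofReal_le_ofReal
        refine (Finset.sum_le_sum fun i _ =>
          mul_le_mul_of_nonneg_left (hrow i) (by positivity)).trans (le_of_eq ?_)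
        have h5 : (L : ℝ) ^ ((3 : ℝ) / 2) = L * √L := by
          rcases Nat.eq_zero_or_pos L with rfl | hL
          · simp
          rw [show (3 : ℝ) / 2 = 1 + 1 / 2 by norm_num, Real.rpow_add (by positivity),
            Real.rpow_one, Real.sqrt_eq_rpow]
        rw [Finset.sum_const, Finset.card_univ, Fintype.card_fin, nsmul_eq_mul, h5,
          Real.sqrt_div (by norm_num), Real.sqrt_sq h0.le]
        field_simp
        ring
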